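/- Let a_n = 4·B_{n+2}·(2^{n+2} − 1)/(n+2) for each non-negative integer n (the angle defect sequence). Then a_0 = 1, and for every positive integer n one has a_n + Σ_{i=0}^{n−1} (a_i/2)·C(n+1, i+1) = 1, where C(m,k) denotes the binomial coefficient. -/

import Mathlib

noncomputable section

namespace AngleDefectPaper

/-- The angle defect sequence `a_n = 4 B_{n+2} (2^{n+2} - 1)/(n+2)`, where `B_k`
is the `k`-th Bernoulli number (with the convention `B_1 = -1/2`). -/
def ads (n : ℕ) : ℚ :=
  4 * bernoulli (n + 2) * (2 ^ (n + 2) - 1) / (n + 2)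

/-! The angle defect sequence has the exponential generating function
`S = ∑ a_n X^(n+1)/(n+1)! = 2 (e^X - 1)/(e^X + 1) = 2 tanh (X/2)`. Indeed, `B(X) = X/(e^X - 1)`
generates the Bernoulli numbers, `B(2X) - B(X) = -X/(e^X + 1)`, and
`X S = 4 (B(2X) - B(X)) + 2 X`, where `2 X` removes the contribution of `B_1`. Multiplying `S` by
`e^X + 1` and comparing coefficients of `X^(n+1)/(n+1)!` gives the recursion. -/

open PowerSeries

section ExponentialSeries

variable (A : Type*) [CommRing A] [Algebra ℚ A]

lemma factorial_mul_coeff_exp (n : ℕ) : (n.factorial : A) * coeff n (exp A) = 1 := by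
  rw [coeff_exp, ← map_natCast (algebraMap ℚ A), ← map_mul,
    mul_one_div_cancel (Nat.cast_ne_zero.mpr n.factorial_ne_zero), map_one]

variable {A} in
lemma factorial_mul_coeff_mul_exp (f : A⟦X⟧) (n : ℕ) :
    n.factorial * coeff n (f * exp A) =
      ∑ k ∈ Finset.range (n + 1), n.choose k * (k.factorial * coeff k f) := by
  rw [coeff_mul, Finset.Nat.sum_antidiagonal_eq_sum_range_succ_mk, Finset.mul_sum]
  refine Finset.sum_congr rfl fun k hk => ?_
  rw [← Nat.choose_mul_factorial_mul_factorial (Finset.mem_range_succ_iff.mp hk)]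
  push_cast
  linear_combination
    (n.choose k * k.factorial * coeff k f : A) * factorial_mul_coeff_exp A (n - k)

lemma isLeftRegular_exp_sub_one : IsLeftRegular (exp A - 1) := by
  have isLeftRegular_X : IsLeftRegular (X : A⟦X⟧) := X_mul_injective
  rw [← bernoulliPowerSeries_mul_exp_sub_one] at isLeftRegular_X
  exact isLeftRegular_X.of_mul

lemma rescale_two_bernoulliPowerSeries_sub_mul_exp_add_one :
    (rescale 2 (bernoulliPowerSeries A) - bernoulliPowerSeries A) * (exp A + 1) = -X := by
  have hB := bernoulliPowerSeries_mul_exp_sub_one A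
  have hB₂ : rescale 2 (bernoulliPowerSeries A) * (exp A ^ 2 - 1) = 2 * X := by
    simpa [exp_pow_eq_rescale_exp, rescale_X, map_ofNat] using congrArg (rescale 2) hB
  apply isLeftRegular_exp_sub_one A
  linear_combination hB₂ - (exp A + 1) * hB

lemma coeff_rescale_two_bernoulliPowerSeries_sub (n : ℕ) :
    coeff n (rescale 2 (bernoulliPowerSeries A) - bernoulliPowerSeries A) =
      algebraMap ℚ A ((2 ^ n - 1) * bernoulli n / n.factorial) := by
  rw [map_sub, coeff_rescale, bernoulliPowerSeries, coeff_mk, mul_div_assoc, map_mul, map_sub,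
    map_pow, map_ofNat, map_one]
  ring

end ExponentialSeries

lemma ads_div_factorial (n : ℕ) :
    ads n / (n + 1).factorial =
      4 * ((2 ^ (n + 2) - 1) * bernoulli (n + 2) / (n + 2).factorial) := by
  rw [ads, Nat.factorial_succ (n + 1)]
  push_cast
  field_simp
  ring

/-- The exponential generating function `∑ a_n X^(n+1)/(n+1)!` of the angle defect sequence. The
index shift matches the binomial coefficients `C(n+1, i+1)` of the recursion. -/
def adsPowerSeries : ℚ⟦X⟧ :=
  X * PowerSeries.mk fun n => ads n / (n + 1).factorial

lemma coeff_zero_adsPowerSeries : coeff 0 adsPowerSeries = 0 :=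
  coeff_zero_X_mul _

lemma coeff_succ_adsPowerSeries (n : ℕ) :
    coeff (n + 1) adsPowerSeries = ads n / (n + 1).factorial := by
  rw [adsPowerSeries, coeff_succ_X_mul, coeff_mk]

lemma factorial_mul_coeff_succ_adsPowerSeries (n : ℕ) :
    (n + 1).factorial * coeff (n + 1) adsPowerSeries = ads n := by
  rw [coeff_succ_adsPowerSeries]
  field_simp

lemma X_mul_adsPowerSeries :
    X * adsPowerSeries =
      4 • (rescale 2 (bernoulliPowerSeries ℚ) - bernoulliPowerSeries ℚ) + 2 • X := by
  ext k
  rw [map_add, map_nsmul, map_nsmul, coeff_rescale_two_bernoulliPowerSeries_sub,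
    Algebra.algebraMap_self_apply, coeff_X]
  match k with
  | 0 => simp
  | 1 =>
    rw [coeff_succ_X_mul, coeff_zero_adsPowerSeries, bernoulli_one]
    norm_num
  | n + 2 =>
    rw [coeff_succ_X_mul, coeff_succ_adsPowerSeries, ads_div_factorial, if_neg (by simp), smul_zero,
      add_zero, nsmul_eq_mul, Nat.cast_ofNat]

lemma adsPowerSeries_mul_exp_add_one : adsPowerSeries * (exp ℚ + 1) = 2 • (exp ℚ - 1) := by
  apply X_mul_cancel
  linear_combination (exp ℚ + 1) * X_mul_adsPowerSeries +
    4 * rescale_two_bernoulliPowerSeries_sub_mul_exp_add_one ℚ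

lemma factorial_mul_coeff_succ_adsPowerSeries_mul_exp (n : ℕ) :
    (n + 1).factorial * coeff (n + 1) (adsPowerSeries * exp ℚ) =
      ∑ i ∈ Finset.range (n + 1), (n + 1).choose (i + 1) * ads i := by
  rw [factorial_mul_coeff_mul_exp, Finset.sum_range_succ', coeff_zero_adsPowerSeries, mul_zero,
    mul_zero, add_zero]
  refine Finset.sum_congr rfl fun i _ => ?_
  rw [factorial_mul_coeff_succ_adsPowerSeries]

lemma ads_add_sum_choose_mul_ads (n : ℕ) :
    ads n + ∑ i ∈ Finset.range (n + 1), (n + 1).choose (i + 1) * ads i = 2 := by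
  have hcoeff : coeff (n + 1) (adsPowerSeries * exp ℚ) + coeff (n + 1) adsPowerSeries =
      2 * coeff (n + 1) (exp ℚ) := by
    have h := congrArg (coeff (n + 1)) adsPowerSeries_mul_exp_add_one
    rwa [mul_add, mul_one, map_add, map_nsmul, map_sub, coeff_one, if_neg n.succ_ne_zero, sub_zero,
      nsmul_eq_mul, Nat.cast_ofNat] at h
  rw [← factorial_mul_coeff_succ_adsPowerSeries_mul_exp]
  linear_combination (n + 1).factorial * hcoeff - factorial_mul_coeff_succ_adsPowerSeries n +
    2 * factorial_mul_coeff_exp ℚ (n + 1)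

/-- The angle defect sequence satisfies the recursion `a_0 = 1` and
`a_n + Σ_{i=0}^{n-1} (a_i/2) C(n+1, i+1) = 1` for all positive `n`. -/
theorem ads_recursion :
    ads 0 = 1 ∧
      ∀ n : ℕ, 0 < n →
        ads n + ∑ i ∈ Finset.range n, ads i / 2 * ((n + 1).choose (i + 1) : ℚ) = 1 := by
  refine ⟨by norm_num [ads, bernoulli_two], fun n _ => ?_⟩
  have hsum := ads_add_sum_choose_mul_ads n
  rw [Finset.sum_range_succ, Nat.choose_self, Nat.cast_one, one_mul] at hsum
  have hhalf : ∑ i ∈ Finset.range n, ads i / 2 * ((n + 1).choose (i + 1) : ℚ) =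
      (∑ i ∈ Finset.range n, (n + 1).choose (i + 1) * ads i) / 2 := by
    rw [Finset.sum_div]
    exact Finset.sum_congr rfl fun i _ => by ring
  linear_combination hhalf + hsum / 2

end AngleDefectPaper
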